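/- Let G be a finite DAG with transfer polynomials m as above, and let e₁, e₂, e₃ be edges such that e₂ and e₃ are both reachable from e₁. Let e be the last (in topological order) common bottleneck between e₁ and e₂ and between e₁ and e₃ (i.e., the last edge lying on every path from e₁ to e₂ and on every path from e₁ to e₃). Then m_{e₁ e}(x) = gcd(m_{e₁ e₂}(x), m_{e₁ e₃}(x)) in the polynomial ring. -/

import Mathlib

/-- Adjacency of edges in a network: edge `e'` can follow edge `e` in a path when the
destination node of `e` is the source node of `e'`. -/
def EdgeAdj {V E : Type*} (src dst : E → V) (e e' : E) : Prop := dst e = src e'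

/-- `l` is a directed path (a nonempty sequence of consecutively adjacent edges) from
edge `a` to edge `b`. -/
def IsEdgePath {V E : Type*} (src dst : E → V) (a b : E) (l : List E) : Prop :=
  l.Chain' (EdgeAdj src dst) ∧ l.head? = some a ∧ l.getLast? = some b

/-- The monomial `t_P(x)` of a path `P = (e₁,…,e_k)`: the product of the coding variables
`x_{eᵢeᵢ₊₁}` along the path. -/
noncomputable def pathMonomial {E : Type*} (F : Type*) [Field F] (l : List E) :
    MvPolynomial (E × E) F :=
  ((l.zip l.tail).map fun p => (MvPolynomial.X p : MvPolynomial (E × E) F)).prod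

/-- The transfer polynomial `m_{ab}(x) = Σ_{P ∈ P_{ab}} t_P(x)`, where `Paths a b` is the
(finite) set of directed paths from `a` to `b`. -/
noncomputable def transferPoly {E : Type*} (F : Type*) [Field F]
    (Paths : E → E → Finset (List E)) (a b : E) : MvPolynomial (E × E) F :=
  ∑ l ∈ Paths a b, pathMonomial F l

section Helpers

open MvPolynomial

variable {V E : Type*} {src dst : E → V}

/-- the exponent of a path -/
noncomputable def pathExp {E : Type*} (l : List E) : (E × E) →₀ ℕ :=
  ((l.zip l.tail).map fun p => Finsupp.single p 1).sum

lemma pathExp_cons_cons (a b : E) (l : List E) :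
    pathExp (a :: b :: l) = Finsupp.single (a, b) 1 + pathExp (b :: l) := by
  simp [pathExp]

lemma pathExp_singleton (a : E) : pathExp [a] = 0 := by simp [pathExp]

lemma pathMonomial_eq (F : Type*) [Field F] (l : List E) :
    pathMonomial F l = monomial (pathExp l) 1 := by
  unfold pathMonomial pathExp
  induction (l.zip l.tail) with
  | nil => simp
  | cons p t ih =>
    rw [List.map_cons, List.prod_cons, ih, List.map_cons, List.sum_cons, X, monomial_mul, one_mul]

lemma pathExp_append (p : List E) (c : E) (q : List E) :
    pathExp (p ++ c :: q) = pathExp (p ++ [c]) + pathExp (c :: q) := by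
  induction p with
  | nil => simp [pathExp_singleton]
  | cons a p ih =>
    cases p with
    | nil => simp [pathExp_cons_cons, pathExp_singleton]
    | cons b p =>
      simp only [List.cons_append, pathExp_cons_cons] at ih ⊢
      rw [ih, add_assoc]

lemma pathExp_ne_zero_iff (l : List E) (u w : E) :
    pathExp l (u, w) ≠ 0 ↔ ∃ p q, l = p ++ u :: w :: q := by
  induction l with
  | nil => simp [pathExp]
  | cons a l ih =>
    cases l with
    | nil =>
      simp only [pathExp_singleton, Finsupp.coe_zero, Pi.zero_apply, ne_eq, not_true_eq_false,
        false_iff]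
      rintro ⟨p, q, h⟩
      have := congrArg List.length h
      simp at this
      omega
    | cons b l =>
      rw [pathExp_cons_cons, Finsupp.add_apply]
      constructor
      · intro h
        by_cases h' : pathExp (b :: l) (u, w) = 0
        · have h1 : (Finsupp.single (a, b) 1 : (E × E) →₀ ℕ) (u, w) ≠ 0 := by
            intro h2; exact h (by rw [h2, h'])
          have h2 := Finsupp.single_apply_ne_zero.1 h1
          obtain ⟨rfl, rfl⟩ := Prod.mk.inj h2.1
          exact ⟨[], l, rfl⟩
        · obtain ⟨p, q, h2⟩ := ih.1 h'
          exact ⟨a :: p, q, by rw [h2]; rfl⟩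
      · rintro ⟨p, q, h⟩
        cases p with
        | nil =>
          simp only [List.nil_append, List.cons.injEq] at h
          obtain ⟨rfl, rfl, rfl⟩ := h
          simp
        | cons x p =>
          simp only [List.cons_append, List.cons.injEq] at h
          have := ih.2 ⟨p, q, h.2⟩
          omega

lemma pathExp_le_one (l : List E) (hl : l.Nodup) (x : E × E) : pathExp l x ≤ 1 := by
  obtain ⟨u, w⟩ := x
  induction l with
  | nil => simp [pathExp]
  | cons a l ih =>
    cases l with
    | nil => simp [pathExp]
    | cons b l =>
      rw [pathExp_cons_cons, Finsupp.add_apply]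
      have ih' := ih (List.nodup_cons.1 hl).2
      by_cases h1 : (a, b) = (u, w)
      · obtain ⟨rfl, rfl⟩ := Prod.mk.inj h1
        have : pathExp (b :: l) (a, b) = 0 := by
          by_contra h
          obtain ⟨p, q, h⟩ := (pathExp_ne_zero_iff _ _ _).1 h
          apply (List.nodup_cons.1 hl).1
          rw [h]; simp
        simp [this]
      · rw [Finsupp.single_eq_of_ne (Ne.symm h1)]; omega

lemma pathExp_inj (l l' : List E) (hl : l.Nodup) (hl' : l'.Nodup) (hh : l.head? = l'.head?)
    (h : pathExp l = pathExp l') : l = l' := by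
  induction l generalizing l' with
  | nil => simpa [eq_comm] using hh
  | cons a l ih =>
    cases l' with
    | nil => simp at hh
    | cons a' l' =>
      obtain rfl : a = a' := by simpa using hh
      cases l with
      | nil =>
        cases l' with
        | nil => rfl
        | cons b l' =>
          exfalso
          have := DFunLike.congr_fun h (a, b)
          rw [pathExp_cons_cons] at this
          simp [pathExp_singleton] at this
          omega
      | cons b l =>
        have h1 : pathExp (a :: l') (a, b) ≠ 0 := by
          rw [← h]; exact (pathExp_ne_zero_iff _ _ _).2 ⟨[], l, rfl⟩
        obtain ⟨p, q, h2⟩ := (pathExp_ne_zero_iff _ _ _).1 h1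
        cases p with
        | cons x p =>
          exfalso
          simp only [List.cons_append, List.cons.injEq] at h2
          apply (List.nodup_cons.1 hl').1
          rw [h2.2]; simp
        | nil =>
          simp only [List.nil_append, List.cons.injEq, true_and] at h2
          subst h2
          rw [pathExp_cons_cons, pathExp_cons_cons] at h
          rw [ih (b :: q) (List.nodup_cons.1 hl).2 (List.nodup_cons.1 hl').2 rfl
            (add_left_cancel h)]

lemma chain_pairwise {l : List E} (h : l.Chain' (EdgeAdj src dst)) :
    l.Pairwise (Relation.TransGen (EdgeAdj src dst)) := by
  have h' : l.IsChain (EdgeAdj src dst) := h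
  exact List.isChain_iff_pairwise.1 (h'.imp fun _ _ => Relation.TransGen.single)

lemma chain_nodup (hacyc : ∀ a : E, ¬ Relation.TransGen (EdgeAdj src dst) a a)
    {l : List E} (h : l.Chain' (EdgeAdj src dst)) : l.Nodup :=
  List.Pairwise.imp (S := (· ≠ ·))
    (fun {a b} hab heq => hacyc a (by subst heq; exact hab)) (chain_pairwise h)

lemma isEdgePath_split {a b c : E} (p q : List E) :
    IsEdgePath src dst a b (p ++ c :: q) ↔
      IsEdgePath src dst a c (p ++ [c]) ∧ IsEdgePath src dst c b (c :: q) := by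
  unfold IsEdgePath
  have h : (p ++ c :: q).Chain' (EdgeAdj src dst) ↔
      (p ++ [c]).Chain' (EdgeAdj src dst) ∧ (c :: q).Chain' (EdgeAdj src dst) :=
    List.isChain_split
  rw [h]
  have h1 : (p ++ c :: q).head? = (p ++ [c]).head? := by cases p <;> simp
  have h2 : (p ++ c :: q).getLast? = (c :: q).getLast? := by
    rw [List.getLast?_append, List.getLast?_cons]; rfl
  rw [h1, h2]
  simp
  tauto

variable {F : Type*} [Field F]

lemma transfer_factor (hacyc : ∀ a : E, ¬ Relation.TransGen (EdgeAdj src dst) a a)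
    (Paths : E → E → Finset (List E))
    (hPaths : ∀ a b l, l ∈ Paths a b ↔ IsEdgePath src dst a b l)
    (a b c : E) (hbot : ∀ l ∈ Paths a b, c ∈ l) :
    transferPoly F Paths a b = transferPoly F Paths a c * transferPoly F Paths c b := by
  have hp : ∀ p ∈ Paths a c, ∃ p0, p = p0 ++ [c] := by
    intro p hp
    have := ((hPaths _ _ _).1 hp).2.2
    exact List.getLast?_eq_some_iff.1 this
  have hq : ∀ q ∈ Paths c b, ∃ q0, q = c :: q0 := by
    intro q hq
    have := ((hPaths _ _ _).1 hq).2.1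
    exact List.head?_eq_some_iff.1 this
  unfold transferPoly
  rw [Finset.sum_mul_sum, ← Finset.sum_product']
  symm
  refine Finset.sum_nbij (fun x => x.1 ++ x.2.tail) ?_ ?_ ?_ ?_
  · rintro ⟨p, q⟩ h
    obtain ⟨h1, h2⟩ := Finset.mem_product.1 h
    obtain ⟨p, rfl⟩ := hp p h1
    obtain ⟨q, rfl⟩ := hq q h2
    rw [hPaths] at h1 h2 ⊢
    simpa using (isEdgePath_split p q).2 ⟨h1, h2⟩
  · rintro ⟨p, q⟩ h ⟨p', q'⟩ h' heq
    obtain ⟨h1, h2⟩ := Finset.mem_product.1 h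
    obtain ⟨h1', h2'⟩ := Finset.mem_product.1 h'
    obtain ⟨p, rfl⟩ := hp p h1
    obtain ⟨q, rfl⟩ := hq q h2
    obtain ⟨p', rfl⟩ := hp p' h1'
    obtain ⟨q', rfl⟩ := hq q' h2'
    simp only [List.tail_cons, List.append_assoc, List.singleton_append] at heq
    rw [hPaths] at h1 h1' h2 h2'
    have hn := chain_nodup hacyc ((isEdgePath_split p q).2 ⟨h1, h2⟩).1
    have hn' := chain_nodup hacyc ((isEdgePath_split p' q').2 ⟨h1', h2'⟩).1
    have e1 : c ∉ p := fun hc => (List.disjoint_of_nodup_append hn) hc (by simp)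
    have e2 : c ∉ q := (List.nodup_cons.1 (List.nodup_append.1 hn).2.1).1
    have e1' : c ∉ p' := fun hc => (List.disjoint_of_nodup_append hn') hc (by simp)
    have e2' : c ∉ q' := (List.nodup_cons.1 (List.nodup_append.1 hn').2.1).1
    have := (List.append_cons_inj_of_notMem e1' e2').1 heq.symm
    obtain ⟨rfl, -, rfl⟩ := this
    rfl
  · intro l hl
    obtain ⟨p, q, rfl⟩ := List.append_of_mem (hbot l hl)
    have := (isEdgePath_split p q).1 ((hPaths _ _ _).1 hl)
    refine ⟨(p ++ [c], c :: q), ?_, by simp⟩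
    simp only [Finset.coe_product, Set.mem_prod, Finset.mem_coe, hPaths]
    exact this
  · rintro ⟨p, q⟩ h
    obtain ⟨h1, h2⟩ := Finset.mem_product.1 h
    obtain ⟨p, rfl⟩ := hp p h1
    obtain ⟨q, rfl⟩ := hq q h2
    simp only [List.tail_cons, List.append_assoc, List.singleton_append, pathMonomial_eq,
      monomial_mul, one_mul]
    rw [pathExp_append p c q]

lemma transfer_coeff_path (hacyc : ∀ a : E, ¬ Relation.TransGen (EdgeAdj src dst) a a)
    (Paths : E → E → Finset (List E))
    (hPaths : ∀ a b l, l ∈ Paths a b ↔ IsEdgePath src dst a b l)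
    (a b : E) (l : List E) (hl : l ∈ Paths a b) :
    coeff (pathExp l) (transferPoly F Paths a b) = 1 := by
  classical
  unfold transferPoly
  rw [coeff_sum, Finset.sum_eq_single l]
  · simp [pathMonomial_eq]
  · intro l' hl' hne
    rw [pathMonomial_eq, coeff_monomial, if_neg]
    intro h
    rw [hPaths] at hl hl'
    exact hne (pathExp_inj l' l (chain_nodup hacyc hl'.1) (chain_nodup hacyc hl.1)
      (by rw [hl.2.1, hl'.2.1]) h)
  · intro h; exact absurd hl h

lemma transfer_support (Paths : E → E → Finset (List E))
    (a b : E) (s : (E × E) →₀ ℕ) (hs : coeff s (transferPoly F Paths a b) ≠ 0) :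
    ∃ l ∈ Paths a b, pathExp l = s := by
  classical
  unfold transferPoly at hs
  rw [coeff_sum] at hs
  obtain ⟨l, hl, h⟩ := Finset.exists_ne_zero_of_sum_ne_zero hs
  refine ⟨l, hl, ?_⟩
  rw [pathMonomial_eq, coeff_monomial] at h
  by_contra hne
  rw [if_neg hne] at h
  exact h rfl

/-- Coefficients of a product of polynomials with disjoint variables. -/
lemma coeff_mul_disjoint {σ : Type*} [DecidableEq σ] (d g : MvPolynomial σ F)
    (hdis : ∀ x, x ∈ d.vars → x ∉ g.vars) (s t : σ →₀ ℕ)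
    (hs : ∀ x, s x ≠ 0 → x ∈ d.vars) (ht : ∀ x, t x ≠ 0 → x ∉ d.vars) :
    coeff (s + t) (d * g) = coeff s d * coeff t g := by
  rw [coeff_mul, Finset.sum_eq_single (s, t)]
  · rintro ⟨s', t'⟩ hmem hne
    by_contra hc
    apply hne
    have h1 : coeff s' d ≠ 0 := left_ne_zero_of_mul hc
    have h2 : coeff t' g ≠ 0 := right_ne_zero_of_mul hc
    have hs' : ∀ x, s' x ≠ 0 → x ∈ d.vars := fun x hx =>
      (mem_vars_iff_mem_support x).2 ⟨s', mem_support_iff.2 h1, Finsupp.mem_support_iff.2 hx⟩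
    have ht' : ∀ x, t' x ≠ 0 → x ∈ g.vars := fun x hx =>
      (mem_vars_iff_mem_support x).2 ⟨t', mem_support_iff.2 h2, Finsupp.mem_support_iff.2 hx⟩
    have hsum := Finset.HasAntidiagonal.mem_antidiagonal.1 hmem
    have key : ∀ x, s' x = s x ∧ t' x = t x := by
      intro x
      have hx := DFunLike.congr_fun hsum x
      simp only [Finsupp.add_apply] at hx
      by_cases hd : x ∈ d.vars
      · have a1 : t x = 0 := by by_contra h; exact ht x h hd
        have a2 : t' x = 0 := by by_contra h; exact hdis x hd (ht' x h)
        omega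
      · have a1 : s x = 0 := by by_contra h; exact hd (hs x h)
        have a2 : s' x = 0 := by by_contra h; exact hd (hs' x h)
        omega
    exact Prod.ext (Finsupp.ext fun x => (key x).1) (Finsupp.ext fun x => (key x).2)
  · intro h; exact absurd (by rw [Finset.HasAntidiagonal.mem_antidiagonal]) h

lemma vars_transfer (Paths : E → E → Finset (List E)) (a b u w : E)
    (h : (u, w) ∈ (transferPoly F Paths a b).vars) :
    ∃ l ∈ Paths a b, ∃ p q, l = p ++ u :: w :: q := by
  obtain ⟨s, hs, hx⟩ := (mem_vars_iff_mem_support _).1 h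
  obtain ⟨l, hl, rfl⟩ := transfer_support Paths a b s (mem_support_iff.1 hs)
  exact ⟨l, hl, (pathExp_ne_zero_iff _ _ _).1 (Finsupp.mem_support_iff.1 hx)⟩

lemma vars_subset_of_mul {σ : Type*} {d g : MvPolynomial σ F} (h : d * g ≠ 0) {x : σ}
    (hx : x ∈ d.vars) : x ∈ (d * g).vars := by
  rw [mem_vars_iff_degreeOf_ne_zero] at hx ⊢
  rw [degreeOf_mul_eq (left_ne_zero_of_mul h) (right_ne_zero_of_mul h)]
  omega

/-- The final vertex of a factor is a bottleneck. -/
lemma factor_bottleneck (hacyc : ∀ a : E, ¬ Relation.TransGen (EdgeAdj src dst) a a)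
    (Paths : E → E → Finset (List E))
    (hPaths : ∀ a b l, l ∈ Paths a b ↔ IsEdgePath src dst a b l)
    (a b : E) (d g : MvPolynomial (E × E) F) (hdg : transferPoly F Paths a b = d * g)
    (hne : (Paths a b).Nonempty)
    (u w : E) (huw : (u, w) ∈ d.vars) (hmax : ∀ w', (w, w') ∉ d.vars) :
    ∀ l ∈ Paths a b, w ∈ l := by
  classical
  have hm : d * g ≠ 0 := by
    obtain ⟨l, hl⟩ := hne
    intro h
    have := transfer_coeff_path (F := F) hacyc Paths hPaths a b l hl
    rw [hdg, h] at this
    simp at this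
  have hdis : ∀ x, x ∈ d.vars → x ∉ g.vars := by
    intro x hx hx'
    have h2 : (transferPoly F Paths a b).degreeOf x ≤ 1 := by
      rw [degreeOf_le_iff]
      intro s hs
      obtain ⟨l, hl, rfl⟩ := transfer_support Paths a b s (mem_support_iff.1 hs)
      exact pathExp_le_one l (chain_nodup hacyc ((hPaths _ _ _).1 hl).1) x
    rw [hdg, degreeOf_mul_eq (left_ne_zero_of_mul hm) (right_ne_zero_of_mul hm)] at h2
    rw [mem_vars_iff_degreeOf_ne_zero] at hx hx'
    omega
  intro Q hQ
  obtain ⟨P, hP, p, q, hPe⟩ := vars_transfer (F := F) Paths a b u w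
    (by rw [hdg]; exact vars_subset_of_mul hm huw)
  have split : ∀ l ∈ Paths a b,
      coeff ((pathExp l).filter (· ∈ d.vars)) d * coeff ((pathExp l).filter (¬ · ∈ d.vars)) g
        ≠ 0 := by
    intro l hl
    rw [← coeff_mul_disjoint d g hdis _ _ ?_ ?_, Finsupp.filter_add_filter_not, ← hdg,
      transfer_coeff_path hacyc Paths hPaths a b l hl]
    · exact one_ne_zero
    · intro x hx
      by_contra h
      exact hx (Finsupp.filter_apply_neg _ _ h)
    · intro x hx h
      exact hx (Finsupp.filter_apply_neg _ _ (not_not.2 h))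
  have hR : coeff ((pathExp P).filter (· ∈ d.vars) + (pathExp Q).filter (¬ · ∈ d.vars))
      (transferPoly F Paths a b) ≠ 0 := by
    rw [hdg, coeff_mul_disjoint d g hdis]
    · exact mul_ne_zero (left_ne_zero_of_mul (split P hP)) (right_ne_zero_of_mul (split Q hQ))
    · intro x hx
      by_contra h
      exact hx (Finsupp.filter_apply_neg _ _ h)
    · intro x hx h
      exact hx (Finsupp.filter_apply_neg _ _ (not_not.2 h))
  obtain ⟨R, hRP, hRe⟩ := transfer_support Paths a b _ hR
  have h1 : pathExp R (u, w) ≠ 0 := by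
    rw [hRe, Finsupp.add_apply, Finsupp.filter_apply_pos _ _ huw]
    have := (pathExp_ne_zero_iff P u w).2 ⟨p, q, hPe⟩
    omega
  obtain ⟨p', q', hR'⟩ := (pathExp_ne_zero_iff _ _ _).1 h1
  cases q' with
  | nil =>
    have hl := ((hPaths _ _ _).1 hRP).2.2
    rw [hR'] at hl
    have : w = b := by simpa [List.getLast?_append] using hl
    subst this
    exact List.mem_of_getLast? ((hPaths _ _ _).1 hQ).2.2
  | cons w' q' =>
    have h2 : pathExp R (w, w') ≠ 0 :=
      (pathExp_ne_zero_iff _ _ _).2 ⟨p' ++ [u], q', by rw [hR']; simp⟩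
    rw [hRe, Finsupp.add_apply, Finsupp.filter_apply_neg _ _ (hmax w'), zero_add,
      Finsupp.filter_apply_pos (fun x => x ∉ d.vars) _ (hmax w')] at h2
    obtain ⟨p'', q'', h3⟩ := (pathExp_ne_zero_iff _ _ _).1 h2
    rw [h3]; simp

lemma tails_relPrime [Finite E]
    (hacyc : ∀ a : E, ¬ Relation.TransGen (EdgeAdj src dst) a a)
    (Paths : E → E → Finset (List E))
    (hPaths : ∀ a b l, l ∈ Paths a b ↔ IsEdgePath src dst a b l)
    (e b c : E) (hb : (Paths e b).Nonempty) (hc : (Paths e c).Nonempty)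
    (hlast : ∀ w, Relation.TransGen (EdgeAdj src dst) e w → (∀ l ∈ Paths e b, w ∈ l) →
      (∀ l ∈ Paths e c, w ∈ l) → False) :
    IsRelPrime (transferPoly F Paths e b) (transferPoly F Paths e c) := by
  rintro d ⟨g, hg⟩ ⟨k, hk⟩
  have hm : d * g ≠ 0 := by
    obtain ⟨l, hl⟩ := hb
    intro h
    have := transfer_coeff_path (F := F) hacyc Paths hPaths e b l hl
    rw [hg, h] at this
    simp at this
  by_contra hu
  have hv : d.vars.Nonempty := by
    rw [Finset.nonempty_iff_ne_empty]
    intro h0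
    have h1 := vars_eq_empty_iff_eq_C.1 h0
    apply hu
    rw [h1]
    apply IsUnit.map
    rw [isUnit_iff_ne_zero]
    intro h2
    rw [h2, C_0] at h1
    exact left_ne_zero_of_mul hm h1
  have wf : WellFounded (fun x y => Relation.TransGen (EdgeAdj src dst) y x) := by
    have : IsTrans E (fun x y => Relation.TransGen (EdgeAdj src dst) y x) :=
      ⟨fun _ _ _ h1 h2 => h2.trans h1⟩
    have : Std.Irrefl (fun x y => Relation.TransGen (EdgeAdj src dst) y x) := ⟨hacyc⟩
    exact Finite.wellFounded_of_trans_of_irrefl _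
  obtain ⟨⟨u0, w0⟩, h0⟩ := hv
  obtain ⟨w, ⟨u, huw⟩, hmin⟩ := wf.has_min {w | ∃ u, (u, w) ∈ d.vars} ⟨w0, u0, h0⟩
  have hedge : ∀ u w, (u, w) ∈ d.vars → ∃ l ∈ Paths e b, ∃ p q, l = p ++ u :: w :: q :=
    fun u w h => vars_transfer (F := F) Paths e b u w
      (by rw [hg]; exact vars_subset_of_mul hm h)
  have hmax : ∀ w', (w, w') ∉ d.vars := by
    intro w' h
    apply hmin w' ⟨w, h⟩
    obtain ⟨l, hl, p, q, rfl⟩ := hedge w w' h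
    have h1 := chain_pairwise ((hPaths _ _ _).1 hl).1
    have h2 := (List.pairwise_append.1 h1).2.1
    exact (List.pairwise_cons.1 h2).1 w' (by simp)
  refine hlast w ?_ (factor_bottleneck hacyc Paths hPaths e b d g hg hb u w huw hmax)
    (factor_bottleneck hacyc Paths hPaths e c d k hk hc u w huw hmax)
  obtain ⟨l, hl, p, q, rfl⟩ := hedge u w huw
  have hl' := (hPaths _ _ _).1 hl
  have h1 := chain_pairwise hl'.1
  cases p with
  | nil =>
    obtain rfl : u = e := by simpa using hl'.2.1
    exact (List.pairwise_cons.1 h1).1 w (by simp)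
  | cons x p =>
    obtain rfl : x = e := by simpa using hl'.2.1
    exact (List.pairwise_cons.1 h1).1 w (by simp)

end Helpers

/-- Let `e₁, e₂, e₃` be edges of a finite DAG with `e₂, e₃` reachable
from `e₁`, and let `e` be the last (in topological order) common bottleneck between
`e₁, e₂` and between `e₁, e₃` (i.e. `e` lies on every path `e₁ → e₂` and every path
`e₁ → e₃`, and every other such common bottleneck is strictly upstream of `e`). Then
`m_{e₁e} = gcd(m_{e₁e₂}, m_{e₁e₃})`: `m_{e₁e}` divides both, and every common divisor of
`m_{e₁e₂}` and `m_{e₁e₃}` divides `m_{e₁e}`. -/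
theorem transfer_gcd_eq_last_common_bottleneck
    {V E F : Type*} [Fintype E] [Field F] (src dst : E → V)
    (hacyc : ∀ a : E, ¬ Relation.TransGen (EdgeAdj src dst) a a)
    (Paths : E → E → Finset (List E))
    (hPaths : ∀ a b l, l ∈ Paths a b ↔ IsEdgePath src dst a b l)
    (e₁ e₂ e₃ e : E)
    (h2 : (Paths e₁ e₂).Nonempty) (h3 : (Paths e₁ e₃).Nonempty)
    (hbot2 : ∀ l ∈ Paths e₁ e₂, e ∈ l) (hbot3 : ∀ l ∈ Paths e₁ e₃, e ∈ l)
    (hlast : ∀ c : E, (∀ l ∈ Paths e₁ e₂, c ∈ l) → (∀ l ∈ Paths e₁ e₃, c ∈ l) →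
      c = e ∨ Relation.TransGen (EdgeAdj src dst) c e) :
    transferPoly F Paths e₁ e ∣ transferPoly F Paths e₁ e₂ ∧
      transferPoly F Paths e₁ e ∣ transferPoly F Paths e₁ e₃ ∧
      ∀ d : MvPolynomial (E × E) F,
        d ∣ transferPoly F Paths e₁ e₂ → d ∣ transferPoly F Paths e₁ e₃ →
          d ∣ transferPoly F Paths e₁ e := by
  have f2 := transfer_factor (F := F) hacyc Paths hPaths e₁ e₂ e hbot2
  have f3 := transfer_factor (F := F) hacyc Paths hPaths e₁ e₃ e hbot3
  have suffix : ∀ b, (∀ l ∈ Paths e₁ b, e ∈ l) → ∀ l ∈ Paths e₁ b, ∃ p q,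
      l = p ++ e :: q ∧ e :: q ∈ Paths e b := by
    intro b hb l hl
    obtain ⟨p, q, rfl⟩ := List.append_of_mem (hb l hl)
    exact ⟨p, q, rfl, (hPaths _ _ _).2 ((isEdgePath_split p q).1 ((hPaths _ _ _).1 hl)).2⟩
  have n2 : (Paths e e₂).Nonempty := by
    obtain ⟨l, hl⟩ := h2
    obtain ⟨p, q, -, h⟩ := suffix e₂ hbot2 l hl
    exact ⟨_, h⟩
  have n3 : (Paths e e₃).Nonempty := by
    obtain ⟨l, hl⟩ := h3
    obtain ⟨p, q, -, h⟩ := suffix e₃ hbot3 l hl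
    exact ⟨_, h⟩
  have hrel : IsRelPrime (transferPoly F Paths e e₂) (transferPoly F Paths e e₃) := by
    refine tails_relPrime hacyc Paths hPaths e e₂ e₃ n2 n3 ?_
    intro w hw hw2 hw3
    have c2 : ∀ l ∈ Paths e₁ e₂, w ∈ l := by
      intro l hl
      obtain ⟨p, q, rfl, h⟩ := suffix e₂ hbot2 l hl
      exact List.mem_append_right _ (hw2 _ h)
    have c3 : ∀ l ∈ Paths e₁ e₃, w ∈ l := by
      intro l hl
      obtain ⟨p, q, rfl, h⟩ := suffix e₃ hbot3 l hl
      exact List.mem_append_right _ (hw3 _ h)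
    rcases hlast w c2 c3 with h | h
    · subst h
      exact hacyc _ hw
    · exact hacyc e (hw.trans h)
  refine ⟨⟨_, f2⟩, ⟨_, f3⟩, ?_⟩
  intro d hd2 hd3
  rw [f2] at hd2
  rw [f3] at hd3
  generalize transferPoly F Paths e₁ e = M at *
  by_cases hM : M = 0
  · rw [hM]; exact dvd_zero d
  obtain ⟨d1, d2, ⟨M', rfl⟩, hd2', rfl⟩ := exists_dvd_and_dvd_of_dvd_mul hd2
  rw [mul_assoc] at hd3
  have h4 := (mul_dvd_mul_iff_left (left_ne_zero_of_mul hM)).1 hd3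
  exact mul_dvd_mul_left d1 ((hrel.of_dvd_left hd2').dvd_of_dvd_mul_right h4)
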